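/- Let (Z, Y₁, H₁, Y₀), (Z, Y₂, H₂, Y₁) and (Z, Y₃, H₃, Y₂) be pre-wreath structures. Then (Z, Y₃, ⟨H₁, H₂, H₃⟩, Y₀) is a pre-wreath structure, and its carrier equals Y₀H₁H₂H₃ = {Y₀h₁h₂h₃ : h₁ ∈ H₁, h₂ ∈ H₂, h₃ ∈ H₃}. -/

import Mathlib

/-- A pre-wreath structure `(Z, Y, H, X)`: `H` is a nontrivial subgroup of `Sym(Z)`,
`X ⊆ Y ⊆ Z`, `X` nonempty, every element of `H` fixes every point outside `Y`,
if `Xh` meets `X` then `h` is the identity on `X`, and every nontrivial `h ∈ H`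
moves some set `Xj` (`j ∈ H`). (Images are written with Lean's left action, so the
set `Xh` of the paper is `⇑h '' X`.) -/
def IsPreWreath {Z : Type*} (Y : Set Z) (H : Subgroup (Equiv.Perm Z)) (X : Set Z) : Prop :=
  H ≠ ⊥ ∧
  (∀ h ∈ H, ∀ z : Z, z ∉ Y → h z = z) ∧
  X ⊆ Y ∧
  X.Nonempty ∧
  (∀ h ∈ H, (⇑h '' X ∩ X).Nonempty → ∀ x ∈ X, h x = x) ∧
  (∀ h ∈ H, h ≠ 1 → ∃ j ∈ H, ⇑h '' (⇑j '' X) ≠ ⇑j '' X)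

/-- The carrier `XH = {Xh : h ∈ H}` of a pre-wreath structure. -/
def wreathCarrier {Z : Type*} (H : Subgroup (Equiv.Perm Z)) (X : Set Z) : Set (Set Z) :=
  {A : Set Z | ∃ h ∈ H, A = ⇑h '' X}

/-- The support of a subgroup of `Sym(Z)`: the points moved by some element. -/
def Supp {Z : Type*} (K : Subgroup (Equiv.Perm Z)) : Set Z :=
  {z : Z | ∃ g ∈ K, g z ≠ z}

/-!
The translates of `Y` under `K` are pairwise equal or disjoint, and a `k ∈ K` that stabilizes one
of them fixes it pointwise; `H` acts inside `Y` alone. Hence `⟨H, K⟩` is a wreath product: each of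
its elements first acts on every translate of `Y` by a copy of some element of `H`, and then
permutes the translates by a single `b ∈ K`. Applied to `Y` itself this turns a translate of
`X ⊆ Y` under `⟨H, K⟩` into one of the form `Xab` with `a ∈ H` and `b ∈ K`. An element of `⟨H, K⟩`
fixing all translates of `X` has `b = 1`, because `b` fixes all translates of `Y`, and then all its
components in `H` are trivial as well. So pre-wreath structures compose, and composing twice gives
the result.
-/

theorem subgroup_sup_induction_left {A : Type*} [Group A] {H K : Subgroup A} {p : A → Prop}
    (one : p 1) (mul_left : ∀ h ∈ H, ∀ g, p g → p (h * g))
    (mul_right : ∀ k ∈ K, ∀ g, p g → p (k * g))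
    {g : A} (hg : g ∈ H ⊔ K) : p g := by
  rw [Subgroup.sup_eq_closure] at hg
  induction hg using Subgroup.closure_induction_left with
  | one => exact one
  | mul_left x hx g _ ih => exact hx.elim (mul_left x · g ih) (mul_right x · g ih)
  | inv_mul_cancel x hx g _ ih =>
    exact hx.elim (fun hx => mul_left x⁻¹ (inv_mem hx) g ih)
      (fun hx => mul_right x⁻¹ (inv_mem hx) g ih)

section Rigidity

variable {Z : Type*} {G : Subgroup (Equiv.Perm Z)} {X : Set Z}

/-- Condition (ii) of a pre-wreath structure, in terms of points: an element of `G` sending some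
point of `X` into `X` fixes `X` pointwise. -/
def IsRigidBlock (G : Subgroup (Equiv.Perm Z)) (X : Set Z) : Prop :=
  ∀ g ∈ G, ∀ x ∈ X, g x ∈ X → ∀ y ∈ X, g y = y

/-- The group `G` acts faithfully on the union `XG` of the translates of `X`. For a rigid block this
is condition (iii) of a pre-wreath structure. -/
def IsFaithfulOnTranslates (G : Subgroup (Equiv.Perm Z)) (X : Set Z) : Prop :=
  ∀ g ∈ G, (∀ j ∈ G, ∀ x ∈ X, g (j x) = j x) → g = 1

theorem isRigidBlock_iff :
    IsRigidBlock G X ↔ ∀ g ∈ G, (⇑g '' X ∩ X).Nonempty → ∀ x ∈ X, g x = x := by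
  constructor
  · rintro hX g hg ⟨_, ⟨x, hx, rfl⟩, hgx⟩
    exact hX g hg x hx hgx
  · intro hX g hg x hx hgx
    exact hX g hg ⟨g x, Set.mem_image_of_mem g hx, hgx⟩

theorem IsRigidBlock.apply_translate_eq (hX : IsRigidBlock G X) {g j : Equiv.Perm Z} (hg : g ∈ G)
    (hj : j ∈ G) {x : Z} (hx : x ∈ X) (hgx : g (j x) ∈ ⇑j '' X) {y : Z} (hy : y ∈ X) :
    g (j y) = j y := by
  obtain ⟨x', hx', hjx'⟩ := hgx
  have hconj : (j⁻¹ * g * j) x ∈ X := by simpa [← hjx'] using hx'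
  have hfix : j⁻¹ (g (j y)) = y :=
    hX _ (mul_mem (mul_mem (inv_mem hj) hg) hj) x hx hconj y hy
  exact Equiv.Perm.inv_eq_iff_eq.mp hfix

theorem IsRigidBlock.image_translate_eq_iff (hX : IsRigidBlock G X) {g j : Equiv.Perm Z}
    (hg : g ∈ G) (hj : j ∈ G) :
    ⇑g '' (⇑j '' X) = ⇑j '' X ↔ ∀ x ∈ X, g (j x) = j x := by
  constructor
  · intro himage x hx
    refine hX.apply_translate_eq hg hj hx ?_ hx
    rw [← himage]
    exact Set.mem_image_of_mem g (Set.mem_image_of_mem j hx)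
  · intro hfix
    rw [Set.image_image]
    exact Set.image_congr hfix

theorem IsRigidBlock.isFaithfulOnTranslates_iff (hX : IsRigidBlock G X) :
    IsFaithfulOnTranslates G X ↔ ∀ g ∈ G, g ≠ 1 → ∃ j ∈ G, ⇑g '' (⇑j '' X) ≠ ⇑j '' X := by
  refine forall₂_congr fun g hg => ?_
  rw [← not_imp_not, not_forall₂]
  refine imp_congr_right fun _ => exists_congr fun j => ?_
  rw [exists_prop]
  exact and_congr_right fun hj => (hX.image_translate_eq_iff hg hj).not.symm

theorem isPreWreath_iff {Y : Set Z} :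
    IsPreWreath Y G X ↔ G ≠ ⊥ ∧ G ≤ fixingSubgroup (Equiv.Perm Z) Yᶜ ∧ X ⊆ Y ∧ X.Nonempty ∧
      IsRigidBlock G X ∧ IsFaithfulOnTranslates G X := by
  have hfix : G ≤ fixingSubgroup (Equiv.Perm Z) Yᶜ ↔ ∀ g ∈ G, ∀ z, z ∉ Y → g z = z := by
    simp only [SetLike.le_def, mem_fixingSubgroup_iff, Set.mem_compl_iff, Equiv.Perm.smul_def]
  rw [IsPreWreath, hfix, ← isRigidBlock_iff]
  refine and_congr_right' <| and_congr_right' <| and_congr_right' <| and_congr_right' ?_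
  exact and_congr_right fun hX => hX.isFaithfulOnTranslates_iff.symm

end Rigidity

section Composition

variable {Z : Type*} {H K : Subgroup (Equiv.Perm Z)} {X Y : Set Z}

open scoped Pointwise in
theorem apply_mem_of_mem_fixingSubgroup_compl {h : Equiv.Perm Z}
    (hh : h ∈ fixingSubgroup (Equiv.Perm Z) Yᶜ) {y : Z} (hy : y ∈ Y) : h y ∈ Y := by
  have hstab : h ∈ MulAction.stabilizer (Equiv.Perm Z) Y := by
    rw [← stabilizer_compl]
    exact MulAction.fixingSubgroup_le_stabilizer _ _ hh
  exact (MulAction.mem_stabilizer_set.mp hstab y).mpr hy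

/-- The wreath product decomposition of an element `g` of `⟨H, K⟩`: the element `b` of `K` permutes
the translates of `Y`, and `a` is the component of `g` at the translate `⇑j '' Y`, transported to
`Y` by `j`. Points on no translate of `Y` are moved by `b` alone. -/
structure IsWreathDecomposition (H K : Subgroup (Equiv.Perm Z)) (Y : Set Z)
    (g b : Equiv.Perm Z) : Prop where
  mem : b ∈ K
  exists_component : ∀ j ∈ K, ∃ a ∈ H, ∀ y ∈ Y, g (j y) = b (j (a y))
  apply_eq_of_notMem : ∀ z, (∀ j ∈ K, j z ∉ Y) → g z = b z

theorem IsWreathDecomposition.one : IsWreathDecomposition H K Y 1 1 where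
  mem := one_mem K
  exists_component _ _ := ⟨1, one_mem H, fun _ _ => rfl⟩
  apply_eq_of_notMem _ _ := rfl

theorem IsWreathDecomposition.top_mul {g b k : Equiv.Perm Z} (hgb : IsWreathDecomposition H K Y g b)
    (hk : k ∈ K) : IsWreathDecomposition H K Y (k * g) (k * b) where
  mem := mul_mem hk hgb.mem
  exists_component j hj :=
    let ⟨a, ha, hga⟩ := hgb.exists_component j hj
    ⟨a, ha, fun y hy => congrArg k (hga y hy)⟩
  apply_eq_of_notMem z hz := congrArg k (hgb.apply_eq_of_notMem z hz)

-- Left multiplication by `h` changes only the component at the translate that `b` carries onto `Y`.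
theorem IsWreathDecomposition.base_mul {g b h : Equiv.Perm Z}
    (hgb : IsWreathDecomposition H K Y g b) (hH : H ≤ fixingSubgroup (Equiv.Perm Z) Yᶜ)
    (hY : IsRigidBlock K Y) (hh : h ∈ H) : IsWreathDecomposition H K Y (h * g) b where
  mem := hgb.mem
  exists_component j hj := by
    obtain ⟨a, ha, hga⟩ := hgb.exists_component j hj
    have ha_mem {y : Z} (hy : y ∈ Y) : a y ∈ Y :=
      apply_mem_of_mem_fixingSubgroup_compl (hH ha) hy
    by_cases hmeet : ∃ y ∈ Y, b (j y) ∈ Y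
    · obtain ⟨y₀, hy₀, hby₀⟩ := hmeet
      have hbj : ∀ y ∈ Y, b (j y) = y := hY (b * j) (mul_mem hgb.mem hj) y₀ hy₀ hby₀
      refine ⟨h * a, mul_mem hh ha, fun y hy => ?_⟩
      calc h (g (j y)) = h (a y) := by rw [hga y hy, hbj _ (ha_mem hy)]
        _ = b (j (h (a y))) :=
          (hbj _ (apply_mem_of_mem_fixingSubgroup_compl (hH hh) (ha_mem hy))).symm
    · refine ⟨a, ha, fun y hy => ?_⟩
      have hnotMem : b (j (a y)) ∉ Y := fun hmem => hmeet ⟨a y, ha_mem hy, hmem⟩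
      calc h (g (j y)) = h (b (j (a y))) := by rw [hga y hy]
        _ = b (j (a y)) := (mem_fixingSubgroup_iff _).mp (hH hh) _ hnotMem
  apply_eq_of_notMem z hz :=
    calc h (g z) = h (b z) := by rw [hgb.apply_eq_of_notMem z hz]
      _ = b z := (mem_fixingSubgroup_iff _).mp (hH hh) _ (hz b hgb.mem)

theorem exists_isWreathDecomposition (hH : H ≤ fixingSubgroup (Equiv.Perm Z) Yᶜ)
    (hY : IsRigidBlock K Y) {g : Equiv.Perm Z} (hg : g ∈ H ⊔ K) :
    ∃ b, IsWreathDecomposition H K Y g b := by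
  refine subgroup_sup_induction_left (p := fun g => ∃ b, IsWreathDecomposition H K Y g b)
    ⟨1, .one⟩ ?_ ?_ hg
  · rintro h hh g ⟨b, hgb⟩
    exact ⟨b, hgb.base_mul hH hY hh⟩
  · rintro k hk g ⟨b, hgb⟩
    exact ⟨k * b, hgb.top_mul hk⟩

theorem exists_eqOn_mul_of_mem_sup (hH : H ≤ fixingSubgroup (Equiv.Perm Z) Yᶜ)
    (hY : IsRigidBlock K Y) {g : Equiv.Perm Z} (hg : g ∈ H ⊔ K) :
    ∃ a ∈ H, ∃ b ∈ K, Set.EqOn g (b * a) Y := by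
  obtain ⟨b, hgb⟩ := exists_isWreathDecomposition hH hY hg
  obtain ⟨a, ha, hga⟩ := hgb.exists_component 1 (one_mem K)
  exact ⟨a, ha, b, hgb.mem, hga⟩

theorem IsRigidBlock.sup (hX : IsRigidBlock H X) (hY : IsRigidBlock K Y)
    (hH : H ≤ fixingSubgroup (Equiv.Perm Z) Yᶜ) (hXY : X ⊆ Y) : IsRigidBlock (H ⊔ K) X := by
  intro g hg x hx hgx
  obtain ⟨a, ha, b, hb, hgab⟩ := exists_eqOn_mul_of_mem_sup hH hY hg
  have ha_mem {y : Z} (hy : y ∈ X) : a y ∈ Y :=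
    apply_mem_of_mem_fixingSubgroup_compl (hH ha) (hXY hy)
  have hb_fix : ∀ y ∈ Y, b y = y :=
    hY b hb (a x) (ha_mem hx) (hgab (hXY hx) ▸ hXY hgx)
  have hga {y : Z} (hy : y ∈ X) : g y = a y :=
    (hgab (hXY hy)).trans (hb_fix _ (ha_mem hy))
  intro y hy
  rw [hga hy]
  exact hX a ha x hx (hga hx ▸ hgx) y hy

theorem IsFaithfulOnTranslates.sup (hX : IsFaithfulOnTranslates H X)
    (hY : IsFaithfulOnTranslates K Y) (hYblock : IsRigidBlock K Y)
    (hH : H ≤ fixingSubgroup (Equiv.Perm Z) Yᶜ) (hXY : X ⊆ Y) (hXne : X.Nonempty) :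
    IsFaithfulOnTranslates (H ⊔ K) X := by
  intro g hg hfix
  obtain ⟨b, hgb⟩ := exists_isWreathDecomposition hH hYblock hg
  have hb_one : b = 1 := by
    refine hY b hgb.mem fun j hj y hy => ?_
    obtain ⟨a, ha, hga⟩ := hgb.exists_component j hj
    obtain ⟨x, hx⟩ := hXne
    have hax : a x ∈ Y := apply_mem_of_mem_fixingSubgroup_compl (hH ha) (hXY hx)
    have hbx : b (j (a x)) = j x :=
      (hga x (hXY hx)).symm.trans (hfix j (Subgroup.mem_sup_right hj) x hx)
    exact hYblock.apply_translate_eq hgb.mem hj hax ⟨x, hXY hx, hbx.symm⟩ hy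
  subst hb_one
  have hg_translate : ∀ j ∈ K, ∀ y ∈ Y, g (j y) = j y := by
    intro j hj y hy
    obtain ⟨a, ha, hga⟩ := hgb.exists_component j hj
    have ha_one : a = 1 := by
      refine hX a ha fun h hh x hx => j.injective ?_
      have hhx : h x ∈ Y := apply_mem_of_mem_fixingSubgroup_compl (hH hh) (hXY hx)
      exact (hga (h x) hhx).symm.trans
        (hfix (j * h) (mul_mem (Subgroup.mem_sup_right hj) (Subgroup.mem_sup_left hh)) x hx)
    simpa only [ha_one, Equiv.Perm.one_apply] using hga y hy
  ext z
  by_cases hz : ∃ j ∈ K, j z ∈ Y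
  · obtain ⟨j, hj, hjz⟩ := hz
    simpa using hg_translate j⁻¹ (inv_mem hj) (j z) hjz
  · exact hgb.apply_eq_of_notMem z fun j hj hjz => hz ⟨j, hj, hjz⟩

theorem mem_wreathCarrier_sup_iff (hH : H ≤ fixingSubgroup (Equiv.Perm Z) Yᶜ)
    (hY : IsRigidBlock K Y) (hXY : X ⊆ Y) {A : Set Z} :
    A ∈ wreathCarrier (H ⊔ K) X ↔ ∃ B ∈ wreathCarrier H X, A ∈ wreathCarrier K B := by
  constructor
  · rintro ⟨g, hg, rfl⟩
    obtain ⟨a, ha, b, hb, hgab⟩ := exists_eqOn_mul_of_mem_sup hH hY hg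
    refine ⟨⇑a '' X, ⟨a, ha, rfl⟩, b, hb, ?_⟩
    rw [Set.image_image]
    exact (hgab.mono hXY).image_eq
  · rintro ⟨_, ⟨a, ha, rfl⟩, b, hb, rfl⟩
    exact ⟨b * a, mul_mem (Subgroup.mem_sup_right hb) (Subgroup.mem_sup_left ha),
      Set.image_image _ _ _⟩

variable {W : Set Z}

theorem IsPreWreath.sup (hHX : IsPreWreath Y H X) (hKY : IsPreWreath W K Y) :
    IsPreWreath W (H ⊔ K) X := by
  rw [isPreWreath_iff] at hHX hKY ⊢
  obtain ⟨hHne, hH, hXY, hXne, hXblock, hXfaithful⟩ := hHX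
  obtain ⟨-, hK, hYW, -, hYblock, hYfaithful⟩ := hKY
  have hHW : H ≤ fixingSubgroup (Equiv.Perm Z) Wᶜ :=
    hH.trans (fixingSubgroup_antitone _ _ (Set.compl_subset_compl.mpr hYW))
  exact ⟨ne_bot_of_le_ne_bot hHne le_sup_left, sup_le hHW hK, hXY.trans hYW, hXne,
    hXblock.sup hYblock hH hXY, hXfaithful.sup hYfaithful hYblock hH hXY hXne⟩

theorem IsPreWreath.mem_wreathCarrier_sup_iff (hHX : IsPreWreath Y H X)
    (hKY : IsPreWreath W K Y) {A : Set Z} :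
    A ∈ wreathCarrier (H ⊔ K) X ↔ ∃ B ∈ wreathCarrier H X, A ∈ wreathCarrier K B := by
  rw [isPreWreath_iff] at hHX hKY
  obtain ⟨-, hH, hXY, -⟩ := hHX
  obtain ⟨-, -, -, -, hYblock, -⟩ := hKY
  exact _root_.mem_wreathCarrier_sup_iff hH hYblock hXY

end Composition

/-- If `(Z, Y₁, H₁, Y₀)`, `(Z, Y₂, H₂, Y₁)`, and `(Z, Y₃, H₃, Y₂)` are
pre-wreath structures, then `(Z, Y₃, ⟨H₁, H₂, H₃⟩, Y₀)` is a pre-wreath structure and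
its carrier equals `{Y₀h₁h₂h₃ : hᵢ ∈ Hᵢ}` (apply `h₁` first, then `h₂`, then `h₃`). -/
theorem stmt10 {Z : Type*} (Y₀ Y₁ Y₂ Y₃ : Set Z)
    (H₁ H₂ H₃ : Subgroup (Equiv.Perm Z))
    (h1 : IsPreWreath Y₁ H₁ Y₀) (h2 : IsPreWreath Y₂ H₂ Y₁)
    (h3 : IsPreWreath Y₃ H₃ Y₂) :
    IsPreWreath Y₃ (H₁ ⊔ H₂ ⊔ H₃) Y₀ ∧
    wreathCarrier (H₁ ⊔ H₂ ⊔ H₃) Y₀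
      = {A : Set Z | ∃ g₁ ∈ H₁, ∃ g₂ ∈ H₂, ∃ g₃ ∈ H₃,
          A = ⇑g₃ '' (⇑g₂ '' (⇑g₁ '' Y₀))} := by
  have h12 : IsPreWreath Y₂ (H₁ ⊔ H₂) Y₀ := h1.sup h2
  refine ⟨h12.sup h3, ?_⟩
  ext A
  rw [h12.mem_wreathCarrier_sup_iff h3]
  simp only [h1.mem_wreathCarrier_sup_iff h2]
  constructor
  · rintro ⟨_, ⟨_, ⟨g₁, hg₁, rfl⟩, g₂, hg₂, rfl⟩, g₃, hg₃, rfl⟩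
    exact ⟨g₁, hg₁, g₂, hg₂, g₃, hg₃, rfl⟩
  · rintro ⟨g₁, hg₁, g₂, hg₂, g₃, hg₃, rfl⟩
    exact ⟨_, ⟨_, ⟨g₁, hg₁, rfl⟩, g₂, hg₂, rfl⟩, g₃, hg₃, rfl⟩
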